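/- Let h ∈ ℝ[x₁,…,x_n], κ_h > 0, β⁻ < 0. Then the CBF derivative condition — for every x with h(x) > β⁻ there exists u ∈ 𝒰 with ḣ(x,u) > −κ_h h(x) — holds if and only if there exist a natural number k_h and polynomials q_h, r_h in preorder(−ḣ(x,u¹)−κ_h h, …, −ḣ(x,uᵐ)−κ_h h) such that q_h(x)·(β⁻−h(x)) = (β⁻−h(x))^{2k_h} + r_h(x) as polynomials. -/

import Mathlib

open MvPolynomial Finset

/-- A polynomial is a sum of squares. -/
def IsSOS {n : ℕ} (p : MvPolynomial (Fin n) ℝ) : Prop :=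
  ∃ (N : ℕ) (q : Fin N → MvPolynomial (Fin n) ℝ), p = ∑ i, (q i) ^ 2

/-- Membership in the preorder generated by `b₁, …, bₘ`. -/
def InPreorder {n m : ℕ} (b : Fin m → MvPolynomial (Fin n) ℝ)
    (p : MvPolynomial (Fin n) ℝ) : Prop :=
  ∃ σ : Finset (Fin m) → MvPolynomial (Fin n) ℝ,
    (∀ J, IsSOS (σ J)) ∧ p = ∑ J : Finset (Fin m), σ J * ∏ i ∈ J, b i

/-- `ḣ(x,u) = ∇h(x)ᵀ(f(x) + g(x)u)` as a polynomial in `x`, for a fixed input vector `u`. -/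
noncomputable def HdotPoly {n nu : ℕ} (h : MvPolynomial (Fin n) ℝ)
    (f : Fin n → MvPolynomial (Fin n) ℝ) (g : Fin n → Fin nu → MvPolynomial (Fin n) ℝ)
    (u : Fin nu → ℝ) : MvPolynomial (Fin n) ℝ :=
  ∑ i, pderiv i h * (f i + ∑ j, C (u j) * g i j)

/-- `ḣ(x,u)` evaluated at the state `x`. -/
noncomputable def HdotFun {n nu : ℕ} (h : MvPolynomial (Fin n) ℝ)
    (f : Fin n → MvPolynomial (Fin n) ℝ) (g : Fin n → Fin nu → MvPolynomial (Fin n) ℝ)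
    (x : Fin n → ℝ) (u : Fin nu → ℝ) : ℝ :=
  eval x (HdotPoly h f g u)

/-!
`ḣ(x, u)` is affine in `u`, so the input can be taken among the vertices `uⁱ`, and the derivative
condition says that `p = β⁻ - h` is nonnegative wherever all `bᵢ = -ḣ(x, uⁱ) - κ_h h` are. The
certificate is the one given by Stengle's Positivstellensatz for this implication.

If there is no certificate, Zorn's lemma yields an ordering of the polynomial ring that contains
the `bᵢ` but not `p`. It is induced by a homomorphism to an ordered field `L` with the
intermediate value property for polynomials: in an algebraic closure, take a maximal subfield over
whose squares the given cone still omits `-1`. The images of the variables form a point over `L`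
with `bᵢ ≥ 0` and `p < 0`, and such a point already exists over `ℝ`. To transfer it, an order
isomorphism between subrings of `L` and `ℝ` is enlarged to a maximal one, which is between subfields
relatively algebraically closed in `L` and `ℝ`; the next coordinate of the point is then determined
by its cut, which is realized in an ultrapower of `ℝ`. After all coordinates have been added, the
finitely many sign conditions descend from the ultrapowers to `ℝ`.
-/

open SignType (sign)
open scoped Polynomial

universe u

/-- An ordered field whose polynomials have the intermediate value property. This is the form in
which real closedness is used here. -/
class PolynomialIVT (L : Type*) [Field L] [LinearOrder L] : Prop where
  exists_root (f : L[X]) {a b : L} (hab : a < b) (hf : f.eval a * f.eval b < 0) :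
    ∃ c ∈ Set.Ioo a b, f.eval c = 0

instance PolynomialIVT.real : PolynomialIVT ℝ where
  exists_root f a b hab hf := by
    rcases mul_neg_iff.mp hf with ⟨ha, hb⟩ | ⟨ha, hb⟩
    · exact intermediate_value_Ioo' hab.le f.continuousOn ⟨hb, ha⟩
    · exact intermediate_value_Ioo hab.le f.continuousOn ⟨ha, hb⟩

theorem sign_eq_sign_of_mul_pos {L : Type*} [Ring L] [LinearOrder L] [IsStrictOrderedRing L]
    {x y : L} (h : 0 < x * y) : sign x = sign y := by
  rcases pos_and_pos_or_neg_and_neg_of_mul_pos h with ⟨hx, hy⟩ | ⟨hx, hy⟩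
  · rw [sign_pos hx, sign_pos hy]
  · rw [sign_neg hx, sign_neg hy]

section OneVariable

variable {L : Type*} [Field L] [LinearOrder L] [IsStrictOrderedRing L] [PolynomialIVT L]

theorem isSquare_of_nonneg {a : L} (ha : 0 ≤ a) : IsSquare a := by
  rcases ha.eq_or_lt with rfl | ha
  · exact IsSquare.zero
  obtain ⟨c, -, hc⟩ := PolynomialIVT.exists_root (Polynomial.X ^ 2 - Polynomial.C a)
    (show (0 : L) < a + 1 by positivity) (by
      have hend : 0 < (a + 1) ^ 2 - a := by nlinarith
      simpa using mul_neg_of_neg_of_pos (neg_neg_of_pos ha) hend)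
  exact ⟨c, by simpa [sub_eq_zero, sq, eq_comm] using hc⟩

theorem strictMono_of_polynomialIVT {F : Type*} [Field F] [LinearOrder F] [IsStrictOrderedRing F]
    (ρ : L →+* F) : StrictMono ρ := by
  refine Monotone.strictMono_of_injective (fun x y hxy => ?_) ρ.injective
  obtain ⟨z, hz⟩ := isSquare_of_nonneg (sub_nonneg.mpr hxy)
  rw [← sub_nonneg, ← map_sub, hz, map_mul]
  exact mul_self_nonneg _

theorem sign_eval_eq_of_ne_zero {f : L[X]} {a b : L} (hab : a ≤ b)
    (hf : ∀ x ∈ Set.Icc a b, f.eval x ≠ 0) : sign (f.eval a) = sign (f.eval b) := by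
  rcases hab.eq_or_lt with rfl | hlt
  · rfl
  refine sign_eq_sign_of_mul_pos (lt_of_not_ge fun hle => ?_)
  have hne : f.eval a * f.eval b ≠ 0 :=
    mul_ne_zero (hf a ⟨le_rfl, hab⟩) (hf b ⟨hab, le_rfl⟩)
  obtain ⟨c, hc, hroot⟩ := PolynomialIVT.exists_root f hlt (hle.lt_of_ne hne)
  exact hf c (Set.Ioo_subset_Icc_self hc) hroot

theorem sign_eval_eq_of_sign_sub_eq {f : L[X]} {x y : L}
    (h : ∀ r ∈ f.roots, sign (r - x) = sign (r - y)) : sign (f.eval x) = sign (f.eval y) := by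
  wlog hxy : x ≤ y generalizing x y
  · exact (this (fun r hr => (h r hr).symm) (le_of_not_ge hxy)).symm
  rcases eq_or_ne f 0 with rfl | hf
  · simp
  by_cases hroot : ∃ r ∈ Set.Icc x y, f.eval r = 0
  · obtain ⟨r, ⟨hxr, hry⟩, hr⟩ := hroot
    have hsign := h r ((Polynomial.mem_roots hf).mpr hr)
    have hrx : r - x = 0 := by
      rw [← sign_eq_zero_iff]
      rcases hxr.eq_or_lt with rfl | hxr
      · simp
      · have : sign (r - y) = 1 := hsign ▸ sign_pos (sub_pos.mpr hxr)
        exact absurd (sign_eq_one_iff.mp this) (sub_nonpos.mpr hry).not_gt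
    have hry : r - y = 0 := by rwa [hrx, sign_zero, eq_comm, sign_eq_zero_iff] at hsign
    rw [← sub_eq_zero.mp hrx, ← sub_eq_zero.mp hry]
  · push Not at hroot
    exact sign_eval_eq_of_ne_zero hxy hroot

-- Only the closed interval is claimed, so multiple roots of `f` need no separate treatment.
theorem exists_eval_derivative_eq_zero {f : L[X]} {a b : L} (hab : a < b)
    (ha : f.eval a = 0) (hb : f.eval b = 0) : ∃ z ∈ Set.Icc a b, f.derivative.eval z = 0 := by
  rcases eq_or_ne f 0 with rfl | hf
  · exact ⟨a, ⟨le_rfl, hab.le⟩, by simp⟩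
  obtain ⟨y, hy, hymin⟩ := (f.roots.toFinset.filter (a < ·)).exists_min_image id
    ⟨b, by simpa [hf, hab] using hb⟩
  simp only [Finset.mem_filter, Multiset.mem_toFinset, Polynomial.mem_roots hf,
    Polynomial.IsRoot, id] at hy hymin
  obtain ⟨hfy, hay⟩ := hy
  have hyb : y ≤ b := hymin b ⟨hb, hab⟩
  obtain ⟨q, rfl⟩ := Polynomial.dvd_iff_isRoot.mpr ha
  obtain ⟨r, rfl⟩ : Polynomial.X - Polynomial.C y ∣ q :=
    Polynomial.dvd_iff_isRoot.mpr (by simpa [sub_eq_zero, hay.ne'] using hfy)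
  set f := (Polynomial.X - Polynomial.C a) * ((Polynomial.X - Polynomial.C y) * r) with hfdef
  have hder_a : f.derivative.eval a = (a - y) * r.eval a := by simp [hfdef]
  have hder_y : f.derivative.eval y = (y - a) * r.eval y := by simp [hfdef]
  rcases eq_or_ne (r.eval a) 0 with hra | hra
  · exact ⟨a, ⟨le_rfl, hab.le⟩, by rw [hder_a, hra, mul_zero]⟩
  rcases eq_or_ne (r.eval y) 0 with hry | hry
  · exact ⟨y, ⟨hay.le, hyb⟩, by rw [hder_y, hry, mul_zero]⟩
  have hr : sign (r.eval a) = sign (r.eval y) := by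
    refine sign_eval_eq_of_ne_zero hay.le fun x hx hrx => ?_
    rcases hx.1.eq_or_lt with rfl | hax
    · exact hra hrx
    · have hyx : y ≤ x := hymin x ⟨by simp [hfdef, hrx], hax⟩
      exact hry (hx.2.antisymm hyx ▸ hrx)
  have hpos : 0 < r.eval a * r.eval y := by
    rw [← sign_eq_one_iff, sign_mul, hr, ← sign_mul, sign_eq_one_iff]
    exact mul_self_pos.mpr hry
  obtain ⟨z, hz, hroot⟩ := PolynomialIVT.exists_root f.derivative hay (by
    rw [hder_a, hder_y]
    nlinarith [mul_pos (mul_pos (sub_pos.mpr hay) (sub_pos.mpr hay)) hpos])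
  exact ⟨z, ⟨hz.1.le, hz.2.le.trans hyb⟩, hroot⟩

theorem sign_eval_eq_sign_sub_mul {f : L[X]} {a b c : L} (ha : f.eval a ≠ 0) (hb : f.eval b ≠ 0)
    (hf : ∀ x ∈ Set.Ioo a b, f.derivative.eval x ≠ 0) (hc : c ∈ Set.Ioo a b)
    (hroot : f.eval c = 0) {x : L} (hx : x ∈ Set.Icc a b) :
    sign (f.eval x) = sign (x - c) * sign (f.eval b) := by
  have hunique : ∀ y ∈ Set.Icc a b, f.eval y = 0 → y = c := by
    rintro y ⟨hay, hyb⟩ hy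
    have hay : a < y := hay.lt_of_ne (by rintro rfl; exact ha hy)
    have hyb : y < b := hyb.lt_of_ne (by rintro rfl; exact hb hy)
    by_contra hne
    rcases lt_or_gt_of_ne hne with hlt | hlt
    · obtain ⟨z, hz, hz'⟩ := exists_eval_derivative_eq_zero hlt hy hroot
      exact hf z ⟨hay.trans_le hz.1, hz.2.trans_lt hc.2⟩ hz'
    · obtain ⟨z, hz, hz'⟩ := exists_eval_derivative_eq_zero hlt hroot hy
      exact hf z ⟨hc.1.trans_le hz.1, hz.2.trans_lt hyb⟩ hz'
  obtain ⟨q, rfl⟩ := Polynomial.dvd_iff_isRoot.mpr hroot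
  have hq : ∀ y ∈ Set.Icc a b, q.eval y ≠ 0 := by
    intro y hy hqy
    obtain rfl := hunique y hy (by simp [hqy])
    exact hf y hc (by simp [hqy])
  have hqx : sign (q.eval x) = sign (q.eval b) :=
    sign_eval_eq_of_ne_zero hx.2 fun y hy => hq y ⟨hx.1.trans hy.1, hy.2⟩
  simp [sign_mul, sign_pos (sub_pos.mpr hc.2), hqx]

end OneVariable

theorem abs_lt_of_eval_eq_zero {L : Type*} [Field L] [LinearOrder L] [IsStrictOrderedRing L]
    {f : L[X]} (hf : f ≠ 0) {c : L} (hc : f.eval c = 0) :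
    |c| < 1 + (∑ k ∈ range f.natDegree, |f.coeff k|) / |f.leadingCoeff| := by
  have hlead : 0 < |f.leadingCoeff| := abs_pos.mpr (Polynomial.leadingCoeff_ne_zero.mpr hf)
  have hsum : 0 ≤ ∑ k ∈ range f.natDegree, |f.coeff k| := sum_nonneg fun k _ => abs_nonneg _
  rcases lt_or_ge |c| 1 with hc1 | hc1
  · exact hc1.trans_le (le_add_of_nonneg_right (by positivity))
  obtain ⟨d, hd⟩ : ∃ d, f.natDegree = d + 1 := Nat.exists_eq_succ_of_ne_zero fun h0 => hf (by
    rw [Polynomial.eq_C_of_natDegree_eq_zero h0, Polynomial.eval_C] at hc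
    rw [Polynomial.eq_C_of_natDegree_eq_zero h0, hc, Polynomial.C_0])
  have hdom : |f.leadingCoeff| * |c| * |c| ^ d ≤ (∑ k ∈ range (d + 1), |f.coeff k|) * |c| ^ d :=
    calc |f.leadingCoeff| * |c| * |c| ^ d = |f.leadingCoeff * c ^ (d + 1)| := by
          rw [abs_mul, abs_pow]; ring
      _ = |∑ k ∈ range (d + 1), f.coeff k * c ^ k| := by
          rw [Polynomial.eval_eq_sum_range, sum_range_succ] at hc
          rw [← hd, eq_neg_of_add_eq_zero_left hc, abs_neg, Polynomial.leadingCoeff]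
      _ ≤ ∑ k ∈ range (d + 1), |f.coeff k| * |c| ^ d := by
          refine (abs_sum_le_sum_abs _ _).trans (sum_le_sum fun k hk => ?_)
          rw [abs_mul, abs_pow]
          exact mul_le_mul_of_nonneg_left
            (pow_le_pow_right₀ hc1 (Nat.lt_succ_iff.mp (mem_range.mp hk))) (abs_nonneg _)
      _ = _ := (sum_mul ..).symm
  rw [hd, ← sub_lt_iff_lt_add', lt_div_iff₀ hlead]
  nlinarith [le_of_mul_le_mul_right hdom (by positivity)]

/-- The points `c` and `c'` satisfy the same polynomial sign conditions over the common
subring `R`. -/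
def SameSign {R L U : Type*} [CommRing R] [Field L] [LinearOrder L] [Field U] [LinearOrder U]
    (i : R →+* L) (j : R →+* U) (c : L) (c' : U) : Prop :=
  ∀ g : R[X], sign (g.eval₂ i c) = sign (g.eval₂ j c')

theorem SameSign.symm {R L U : Type*} [CommRing R] [Field L] [LinearOrder L] [Field U]
    [LinearOrder U] {i : R →+* L} {j : R →+* U} {c : L} {c' : U} (h : SameSign i j c c') :
    SameSign j i c' c :=
  fun g => (h g).symm

section CommonSubfield

variable {M L U : Type*} [Field M] [Field L]

/-- Every root of `g` in the extension `i` of the coefficient field already lies in the coefficient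
field. This holds trivially for `g = 0`, which has no `roots` in Mathlib. -/
def RootsInRange (i : M →+* L) (g : M[X]) : Prop :=
  ∀ y ∈ (g.map i).roots, y ∈ Set.range i

theorem rootsInRange_iff {i : M →+* L} {g : M[X]} (hg : g ≠ 0) :
    RootsInRange i g ↔ ∀ y, g.eval₂ i y = 0 → y ∈ Set.range i := by
  simp only [RootsInRange, Polynomial.mem_roots_map hg]

theorem eval_ne_zero_of_not_rootsInRange {i : M →+* L} {f : M[X]}
    (hmin : ∀ g : M[X], g.natDegree < f.natDegree → RootsInRange i g) (hf : ¬ RootsInRange i f)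
    (m : M) : f.eval m ≠ 0 := by
  intro hm
  have hf0 : f ≠ 0 := by rintro rfl; exact hf (by simp [RootsInRange])
  obtain ⟨q, rfl⟩ := Polynomial.dvd_iff_isRoot.mpr hm
  have hq0 : q ≠ 0 := right_ne_zero_of_mul hf0
  have hq : RootsInRange i q := hmin q (by
    rw [Polynomial.natDegree_mul (Polynomial.X_sub_C_ne_zero m) hq0, Polynomial.natDegree_X_sub_C]
    lia)
  refine hf ((rootsInRange_iff hf0).mpr fun y hy => ?_)
  rw [Polynomial.eval₂_mul, mul_eq_zero] at hy
  rcases hy with hy | hy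
  · exact ⟨m, (sub_eq_zero.mp (by simpa using hy)).symm⟩
  · exact (rootsInRange_iff hq0).mp hq y hy

variable [LinearOrder L] [Field U] [LinearOrder U]

/-- The points `c` and `c'` realize the same cut, possibly a principal one, over the common
subfield `M`. -/
def SameCut (i : M →+* L) (j : M →+* U) (c : L) (c' : U) : Prop :=
  ∀ m, sign (i m - c) = sign (j m - c')

variable [LinearOrder M] [IsStrictOrderedRing M] [IsStrictOrderedRing L] [IsStrictOrderedRing U]

theorem exists_separating {i : M →+* L} (hi : StrictMono i) (Z : Finset M) (c : L) :
    ∃ e, ∀ z ∈ Z, sign (z - e) = sign (i z - c) := by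
  by_cases hc : ∃ m, i m = c
  · obtain ⟨m, rfl⟩ := hc
    exact ⟨m, fun z _ => by rw [← map_sub, hi.sign_comp]⟩
  push Not at hc
  obtain ⟨e, hbelow, habove⟩ := Finset.exists_between' (Z.filter (i · < c)) (Z.filter (c < i ·))
    fun x hx y hy => hi.lt_iff_lt.mp
      ((Finset.mem_filter.mp hx).2.trans (Finset.mem_filter.mp hy).2)
  refine ⟨e, fun z hz => ?_⟩
  rcases lt_or_gt_of_ne (hc z) with hzc | hzc
  · rw [sign_neg (sub_neg.mpr hzc), sign_neg (sub_neg.mpr (hbelow z (by simp [hz, hzc])))]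
  · rw [sign_pos (sub_pos.mpr hzc), sign_pos (sub_pos.mpr (habove z (by simp [hz, hzc])))]

theorem sign_eval₂_eq_sign_eval [PolynomialIVT L] {i : M →+* L} (hi : StrictMono i) {g : M[X]}
    (hg : RootsInRange i g) {c : L} {e : M} (he : ∀ z ∈ g.roots, sign (z - e) = sign (i z - c)) :
    sign (g.eval₂ i c) = sign (g.eval e) := by
  rw [← hi.sign_comp, ← Polynomial.eval₂_at_apply, ← Polynomial.eval_map, ← Polynomial.eval_map]
  refine sign_eval_eq_of_sign_sub_eq fun y hy => ?_
  obtain ⟨z, rfl⟩ := hg y hy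
  have hz : z ∈ g.roots := by
    rw [Polynomial.mem_roots', ← Polynomial.isRoot_map_iff i.injective,
      ← Polynomial.map_ne_zero_iff i.injective (p := g), ← Polynomial.mem_roots']
    exact hy
  rw [← map_sub, hi.sign_comp, he z hz]

theorem SameCut.sign_eval₂_eq [PolynomialIVT L] [PolynomialIVT U] {i : M →+* L} {j : M →+* U}
    (hi : StrictMono i) (hj : StrictMono j) {c : L} {c' : U} (hcut : SameCut i j c c') {g : M[X]}
    (hgL : RootsInRange i g) (hgU : RootsInRange j g) :
    sign (g.eval₂ i c) = sign (g.eval₂ j c') := by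
  obtain ⟨e, he⟩ := exists_separating hi g.roots.toFinset c
  simp only [Multiset.mem_toFinset] at he
  rw [sign_eval₂_eq_sign_eval hi hgL he,
    sign_eval₂_eq_sign_eval hj hgU fun z hz => (he z hz).trans (hcut z)]

theorem exists_gap {i : M →+* L} {c : L} (hc : c ∉ Set.range i) (hbound : ∃ B, |c| < i B)
    (Z : Finset M) : ∃ a b, i a < c ∧ c < i b ∧ ∀ z ∈ Z, z ∉ Set.Ioo a b := by
  obtain ⟨B, hB⟩ := hbound
  obtain ⟨hBc, hcB⟩ := abs_lt.mp hB
  obtain ⟨a, ha, hamax⟩ := ((insert (-B) Z).filter (i · < c)).exists_max_image id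
    ⟨-B, by simpa using hBc⟩
  obtain ⟨b, hb, hbmin⟩ := ((insert B Z).filter (c < i ·)).exists_min_image id
    ⟨B, by simpa using hcB⟩
  simp only [Finset.mem_filter, Finset.mem_insert, id] at ha hb hamax hbmin
  refine ⟨a, b, ha.2, hb.2, fun z hz ⟨haz, hzb⟩ => ?_⟩
  rcases lt_or_gt_of_ne (fun h => hc ⟨z, h⟩ : i z ≠ c) with hzc | hzc
  · exact (hamax z ⟨.inr hz, hzc⟩).not_gt haz
  · exact (hbmin z ⟨.inr hz, hzc⟩).not_gt hzb

theorem exists_abs_lt_map {i : M →+* L} (hi : StrictMono i) {f : M[X]} (hf : f ≠ 0) {c : L}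
    (hc : f.eval₂ i c = 0) : ∃ B, |c| < i B := by
  have habs (x : M) : |i x| = i |x| := (hi.monotone.map_max.trans (by rw [map_neg]; rfl)).symm
  have h := abs_lt_of_eval_eq_zero ((Polynomial.map_ne_zero_iff i.injective).mpr hf)
    ((Polynomial.eval_map i c).trans hc)
  refine ⟨1 + (∑ k ∈ range f.natDegree, |f.coeff k|) / |f.leadingCoeff|, ?_⟩
  simpa [habs] using h

variable [PolynomialIVT L] [PolynomialIVT U]

theorem sign_eval_eq_sign_map_sub_mul {i : M →+* L} (hi : StrictMono i) {f : M[X]}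
    (hf : ∀ m, f.eval m ≠ 0) (hder : RootsInRange i f.derivative) {a b : M}
    (hgap : ∀ z ∈ f.derivative.roots, z ∉ Set.Ioo a b) {c : L} (hc : c ∈ Set.Ioo (i a) (i b))
    (hroot : f.eval₂ i c = 0) {m : M} (hm : m ∈ Set.Icc a b) :
    sign (f.eval m) = sign (i m - c) * sign (f.eval b) := by
  have hder0 : f.derivative ≠ 0 := by
    intro h
    obtain ⟨x, rfl⟩ := Polynomial.natDegree_eq_zero.mp (Polynomial.derivative_eq_zero.mp h)
    exact hf 0 (by simpa using hroot)
  have hderL : ∀ x ∈ Set.Ioo (i a) (i b), (f.map i).derivative.eval x ≠ 0 := by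
    rintro x ⟨hax, hxb⟩ hx
    rw [Polynomial.derivative_map, Polynomial.eval_map] at hx
    obtain ⟨z, rfl⟩ := (rootsInRange_iff hder0).mp hder x hx
    rw [Polynomial.eval₂_at_apply, map_eq_zero] at hx
    exact hgap z ((Polynomial.mem_roots hder0).mpr hx) ⟨hi.lt_iff_lt.mp hax, hi.lt_iff_lt.mp hxb⟩
  have hfL (x : M) : (f.map i).eval (i x) ≠ 0 := by
    rw [Polynomial.eval_map, Polynomial.eval₂_at_apply]
    exact (map_ne_zero i).mpr (hf x)
  have h := sign_eval_eq_sign_sub_mul (hfL a) (hfL b) hderL hc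
    ((Polynomial.eval_map i c).trans hroot) ⟨hi.monotone hm.1, hi.monotone hm.2⟩
  simpa only [Polynomial.eval_map, Polynomial.eval₂_at_apply, hi.sign_comp] using h

theorem sameCut_of_root {i : M →+* L} {j : M →+* U} (hi : StrictMono i) (hj : StrictMono j)
    {f : M[X]} (hf : ∀ m, f.eval m ≠ 0) (hderL : RootsInRange i f.derivative)
    (hderU : RootsInRange j f.derivative) {a b : M}
    (hgap : ∀ z ∈ f.derivative.roots, z ∉ Set.Ioo a b) {c : L} (hc : c ∈ Set.Ioo (i a) (i b))
    (hfc : f.eval₂ i c = 0) {c' : U} (hc' : c' ∈ Set.Ioo (j a) (j b)) (hfc' : f.eval₂ j c' = 0) :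
    SameCut i j c c' := by
  intro m
  rcases lt_or_ge m a with hma | ham
  · rw [sign_neg (sub_neg.mpr ((hi hma).trans hc.1)), sign_neg (sub_neg.mpr ((hj hma).trans hc'.1))]
  rcases lt_or_ge b m with hbm | hmb
  · rw [sign_pos (sub_pos.mpr (hc.2.trans (hi hbm))), sign_pos (sub_pos.mpr (hc'.2.trans (hj hbm)))]
  have hL := sign_eval_eq_sign_map_sub_mul hi hf hderL hgap hc hfc ⟨ham, hmb⟩
  have hU := sign_eval_eq_sign_map_sub_mul hj hf hderU hgap hc' hfc' ⟨ham, hmb⟩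
  exact mul_right_cancel₀ (sign_ne_zero.mpr (hf b)) (hL.symm.trans hU)

theorem exists_sameCut_of_root {i : M →+* L} {j : M →+* U} (hi : StrictMono i) (hj : StrictMono j)
    {f : M[X]} (hf : ∀ m, f.eval m ≠ 0) (hderL : RootsInRange i f.derivative)
    (hderU : RootsInRange j f.derivative) {c : L} (hfc : f.eval₂ i c = 0) :
    ∃ c' : U, SameCut i j c c' ∧ f.eval₂ j c' = 0 := by
  have hc : c ∉ Set.range i := by
    rintro ⟨m, rfl⟩
    rw [Polynomial.eval₂_at_apply, map_eq_zero] at hfc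
    exact hf m hfc
  have hf0 : f ≠ 0 := by rintro rfl; exact hf 0 Polynomial.eval_zero
  obtain ⟨a, b, hac, hcb, hgap⟩ := exists_gap hc (exists_abs_lt_map hi hf0 hfc)
    f.derivative.roots.toFinset
  simp only [Multiset.mem_toFinset] at hgap
  have hab : a < b := hi.lt_iff_lt.mp (hac.trans hcb)
  have hfab : f.eval a * f.eval b < 0 := by
    have h := sign_eval_eq_sign_map_sub_mul hi hf hderL hgap ⟨hac, hcb⟩ hfc ⟨le_rfl, hab.le⟩
    rw [← sign_eq_neg_one_iff, sign_mul, h, sign_neg (sub_neg.mpr hac), mul_assoc, ← sign_mul,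
      sign_pos (mul_self_pos.mpr (hf b)), mul_one]
  obtain ⟨c', hc', hfc'⟩ := PolynomialIVT.exists_root (f.map j) (hj hab) (by
    simpa only [Polynomial.eval_map, Polynomial.eval₂_at_apply, map_mul, map_zero] using hj hfab)
  rw [Polynomial.eval_map] at hfc'
  exact ⟨c', sameCut_of_root hi hj hf hderL hderU hgap ⟨hac, hcb⟩ hfc hc' hfc', hfc'⟩

-- Modulo `f` every polynomial has degree below that of `f`, where equal cuts force equal signs.
theorem exists_sameSign_of_root {i : M →+* L} {j : M →+* U} (hi : StrictMono i) (hj : StrictMono j)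
    {f : M[X]} (hminL : ∀ g : M[X], g.natDegree < f.natDegree → RootsInRange i g)
    (hminU : ∀ g : M[X], g.natDegree < f.natDegree → RootsInRange j g) {c : L}
    (hfc : c ∈ (f.map i).roots) (hc : c ∉ Set.range i) : ∃ c' : U, SameSign i j c c' := by
  have hf := eval_ne_zero_of_not_rootsInRange hminL fun h => hc (h c hfc)
  replace hfc : f.eval₂ i c = 0 := Polynomial.eval_map i c ▸ (Polynomial.mem_roots'.mp hfc).2
  have hdeg : f.natDegree ≠ 0 := by
    intro h
    obtain ⟨x, rfl⟩ := Polynomial.natDegree_eq_zero.mp h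
    exact hf 0 (by simpa using hfc)
  have hder := Polynomial.natDegree_derivative_lt hdeg
  obtain ⟨c', hcut, hfc'⟩ := exists_sameCut_of_root hi hj hf (hminL _ hder) (hminU _ hder) hfc
  refine ⟨c', fun g => ?_⟩
  have hmod := Polynomial.natDegree_mod_lt g hdeg
  rw [← EuclideanDomain.mod_add_div g f]
  simpa [hfc, hfc'] using hcut.sign_eval₂_eq hi hj (hminL _ hmod) (hminU _ hmod)

end CommonSubfield

theorem eval₂_ringHom_prod {R L U : Type*} [CommRing R] [CommRing L] [CommRing U] (i : R →+* L)
    (j : R →+* U) (s : L × U) (g : R[X]) :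
    g.eval₂ (i.prod j) s = (g.eval₂ i s.1, g.eval₂ j s.2) :=
  Prod.ext (Polynomial.hom_eval₂ g (i.prod j) (RingHom.fst L U) s)
    (Polynomial.hom_eval₂ g (i.prod j) (RingHom.snd L U) s)

section PartialIsomorphism

variable {L U : Type*} [Field L] [LinearOrder L] [Field U] [LinearOrder U]

/-- The two coordinates of each element of `S` have the same sign. Such a subring of `L × U` is the
graph of an order isomorphism between a subring of `L` and a subring of `U`. -/
def SignCompatible (S : Subring (L × U)) : Prop :=
  ∀ s ∈ S, sign s.1 = sign s.2

theorem SignCompatible.exists_le_maximal {S : Subring (L × U)} (hS : SignCompatible S) :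
    ∃ S', S ≤ S' ∧ Maximal SignCompatible S' := by
  refine zorn_le_nonempty₀ {S : Subring (L × U) | SignCompatible S} ?_ S hS
  intro c hc hchain y hy
  refine ⟨sSup c, fun s hs => ?_, fun z hz => le_sSup hz⟩
  obtain ⟨T, hT, hsT⟩ := (Subring.mem_sSup_of_directedOn ⟨y, hy⟩ hchain.directedOn).mp hs
  exact hc hT s hsT

theorem signCompatible_range_eval₂ {R : Type*} [CommRing R] {i : R →+* L} {j : R →+* U} {c : L}
    {c' : U} (h : SameSign i j c c') :
    SignCompatible (Polynomial.eval₂RingHom (i.prod j) (c, c')).range := by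
  rintro _ ⟨g, rfl⟩
  rw [Polynomial.coe_eval₂RingHom, eval₂_ringHom_prod]
  exact h g

theorem SameSign.mem_of_maximal {S : Subring (L × U)} (hS : Maximal SignCompatible S)
    {R : Type*} [CommRing R] {i : R →+* L} {j : R →+* U} (hR : S ≤ (i.prod j).range)
    {c : L} {c' : U} (h : SameSign i j c c') : (c, c') ∈ S := by
  refine hS.2 (signCompatible_range_eval₂ h) (fun s hs => ?_) ⟨Polynomial.X, by simp⟩
  obtain ⟨m, rfl⟩ := hR hs
  exact ⟨Polynomial.C m, by simp⟩

theorem SignCompatible.fst_eq_zero_iff {S : Subring (L × U)} (hS : SignCompatible S) {s : L × U}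
    (hs : s ∈ S) : s.1 = 0 ↔ s.2 = 0 := by
  rw [← sign_eq_zero_iff, hS s hs, sign_eq_zero_iff]

variable [IsStrictOrderedRing L] [IsStrictOrderedRing U]

theorem sign_eval₂_inv {R : Type*} [CommRing R] (i : R →+* L) {r : R} (hr : i r ≠ 0) (g : R[X]) :
    sign (g.eval₂ i (i r)⁻¹) = sign (i (g.reverse.eval r * r ^ g.natDegree)) := by
  let _ : Invertible (i r)⁻¹ := invertibleOfNonzero (inv_ne_zero hr)
  have hrev := Polynomial.eval₂_reverse_mul_pow i (i r)⁻¹ g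
  rw [invOf_eq_inv, inv_inv, inv_pow, Polynomial.eval₂_at_apply] at hrev
  have hinv : sign (i r ^ g.natDegree)⁻¹ = sign (i r ^ g.natDegree) := by
    refine sign_eq_sign_of_mul_pos ?_
    rw [inv_mul_cancel₀ (pow_ne_zero _ hr)]
    exact one_pos
  rw [← hrev, map_mul i, map_pow i, sign_mul, hinv, ← sign_mul]

theorem inv_mem_of_maximal {S : Subring (L × U)} (hS : Maximal SignCompatible S)
    {s : L × U} (hs : s ∈ S) : (s.1⁻¹, s.2⁻¹) ∈ S := by
  by_cases hs1 : s.1 = 0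
  · have hs2 := (hS.1.fst_eq_zero_iff hs).mp hs1
    rw [hs1, hs2, inv_zero, inv_zero]
    exact zero_mem S
  have hs2 : s.2 ≠ 0 := fun h => hs1 ((hS.1.fst_eq_zero_iff hs).mpr h)
  let i := (RingHom.fst L U).comp S.subtype
  let j := (RingHom.snd L U).comp S.subtype
  have hsign : SameSign i j s.1⁻¹ s.2⁻¹ := fun g => by
    let r : S := ⟨s, hs⟩
    have hmem := (g.reverse.eval r * r ^ g.natDegree).2
    exact (sign_eval₂_inv i (r := r) hs1 g).trans
      ((hS.1 _ hmem).trans (sign_eval₂_inv j (r := r) hs2 g).symm)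
  exact hsign.mem_of_maximal hS fun t ht => ⟨⟨t, ht⟩, rfl⟩

theorem exists_subfield_of_maximal {S : Subring (L × U)} (hS : Maximal SignCompatible S) :
    ∃ (M : Subfield L) (j : M →+* U), StrictMono j ∧ S = (M.subtype.prod j).range := by
  let M : Subfield L :=
    { S.map (RingHom.fst L U) with
      inv_mem' := by rintro _ ⟨s, hs, rfl⟩; exact ⟨_, inv_mem_of_maximal hS hs, rfl⟩ }
  let p : S →+* M := (RingHom.fst L U).restrict S M fun s hs => ⟨s, hs, rfl⟩
  have hp : Function.Bijective p := by
    refine ⟨(injective_iff_map_eq_zero p).mpr fun s hs => ?_, ?_⟩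
    · have hs1 : s.1.1 = 0 := congrArg Subtype.val hs
      exact Subtype.ext (Prod.ext hs1 ((hS.1.fst_eq_zero_iff s.2).mp hs1))
    · rintro ⟨_, s, hs, rfl⟩
      exact ⟨⟨s, hs⟩, rfl⟩
  let e : S ≃+* M := RingEquiv.ofBijective p hp
  have hfst (m : M) : (e.symm m).1.1 = m := congrArg Subtype.val (e.apply_symm_apply m)
  refine ⟨M, ((RingHom.snd L U).comp S.subtype).comp e.symm.toRingHom, fun x y hxy => ?_,
    le_antisymm ?_ ?_⟩
  · have hsign := hS.1 _ (e.symm (y - x)).2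
    rw [hfst, sign_pos (by simpa using hxy), eq_comm, sign_eq_one_iff, map_sub] at hsign
    exact sub_pos.mp hsign
  · intro s hs
    exact ⟨e ⟨s, hs⟩, Prod.ext rfl (congrArg (fun t : S => t.1.2) (e.symm_apply_apply ⟨s, hs⟩))⟩
  · rintro _ ⟨m, rfl⟩
    convert (e.symm m).2 using 1
    exact Prod.ext (hfst m).symm rfl

-- A polynomial of least degree with a root outside `M`, in `L` or in `U`, would allow extending
-- the graph of `j`.
theorem rootsInRange_of_maximal [PolynomialIVT L] [PolynomialIVT U] {M : Subfield L} {j : M →+* U}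
    (hj : StrictMono j) (hS : Maximal SignCompatible (M.subtype.prod j).range) (g : M[X]) :
    RootsInRange M.subtype g ∧ RootsInRange j g := by
  induction hd : g.natDegree using Nat.strong_induction_on generalizing g with
  | _ d ih =>
    subst hd
    have hi : StrictMono M.subtype := fun _ _ h => h
    have hminL (f : M[X]) (hf : f.natDegree < g.natDegree) := (ih _ hf f rfl).1
    have hminU (f : M[X]) (hf : f.natDegree < g.natDegree) := (ih _ hf f rfl).2
    refine ⟨fun c hc => ?_, fun c' hc' => ?_⟩
    · by_contra hrange
      obtain ⟨c', h⟩ := exists_sameSign_of_root hi hj hminL hminU hc hrange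
      obtain ⟨m, hm⟩ := h.mem_of_maximal hS le_rfl
      exact hrange ⟨m, congrArg Prod.fst hm⟩
    · by_contra hrange
      obtain ⟨c, h⟩ := exists_sameSign_of_root hj hi hminU hminL hc' hrange
      obtain ⟨m, hm⟩ := h.symm.mem_of_maximal hS le_rfl
      exact hrange ⟨m, congrArg Prod.snd hm⟩

end PartialIsomorphism

section Ultrapower

open Filter

variable {I U : Type*} [Field U] (V : Ultrafilter I)

/-- The diagonal embedding of `U` in its ultrapower, the extension in which cuts of `U` are
realized. -/
def diagonal : U →+* Germ (V : Filter I) U :=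
  (Germ.coeRingHom (V : Filter I)).comp (Pi.constRingHom I U)

theorem eval₂_diagonal {R : Type*} [CommRing R] (j : R →+* U) (g : R[X]) (x : I → U) :
    g.eval₂ ((diagonal V).comp j) (x : Germ (V : Filter I) U) =
      ((fun e => g.eval₂ j (x e) : I → U) : Germ (V : Filter I) U) := by
  have hpi : g.eval₂ ((Pi.constRingHom I U).comp j) x = fun e => g.eval₂ j (x e) :=
    funext fun e => Polynomial.hom_eval₂ g ((Pi.constRingHom I U).comp j) (Pi.evalRingHom _ e) x
  rw [← hpi]
  exact (Polynomial.hom_eval₂ g ((Pi.constRingHom I U).comp j)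
    (Germ.coeRingHom (V : Filter I)) x).symm

theorem mvEval₂_diagonal {R σ : Type*} [CommRing R] (j : R →+* U) (p : MvPolynomial σ R)
    (x : σ → I → U) :
    p.eval₂ ((diagonal V).comp j) (fun k => (x k : Germ (V : Filter I) U)) =
      ((fun e => p.eval₂ j (fun k => x k e) : I → U) : Germ (V : Filter I) U) := by
  have hpi : p.eval₂ ((Pi.constRingHom I U).comp j) x = fun e => p.eval₂ j (fun k => x k e) :=
    funext fun e => MvPolynomial.hom_eval₂ p ((Pi.constRingHom I U).comp j) (Pi.evalRingHom _ e) x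
  rw [← hpi]
  exact (MvPolynomial.hom_eval₂ p ((Pi.constRingHom I U).comp j)
    (Germ.coeRingHom (V : Filter I)) x).symm

theorem exists_eval_germ_eq (f : (Germ (V : Filter I) U)[X]) :
    ∃ F : I → U[X], ∀ x : I → U, f.eval (x : Germ (V : Filter I) U) =
      ((fun e => (F e).eval (x e) : I → U) : Germ (V : Filter I) U) := by
  have hsurj : Function.Surjective (Germ.coeRingHom (V : Filter I) : (I → U) →+* Germ _ U) :=
    fun y => Quotient.exists_rep y
  obtain ⟨G, rfl⟩ := Polynomial.map_surjective _ hsurj f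
  refine ⟨fun e => G.map (Pi.evalRingHom _ e), fun x => ?_⟩
  have hpi : G.eval x = fun e => (G.map (Pi.evalRingHom _ e)).eval (x e) := funext fun e => by
    rw [Polynomial.eval_map]
    exact (Polynomial.eval₂_at_apply (Pi.evalRingHom (fun _ : I => U) e) x).symm
  rw [← hpi, Polynomial.eval_map]
  exact Polynomial.eval₂_at_apply (Germ.coeRingHom (V : Filter I)) x

variable [LinearOrder U]

theorem eventually_sign_eq (x : I → U) :
    ∀ᶠ e in V, sign (x e) = sign (x : Germ (V : Filter I) U) := by
  rcases lt_trichotomy (x : Germ (V : Filter I) U) 0 with h | h | h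
  · rw [sign_neg h]
    exact (Germ.coe_lt.mp h).mono fun e he => sign_neg he
  · rw [h, sign_zero]
    exact (Germ.coe_eq.mp h).mono fun e he => sign_eq_zero_iff.mpr he
  · rw [sign_pos h]
    exact (Germ.coe_lt.mp h).mono fun e he => sign_pos he

instance PolynomialIVT.germ [PolynomialIVT U] : PolynomialIVT (Germ (V : Filter I) U) where
  exists_root f a b hab hf := by
    induction a using Germ.inductionOn with | _ a
    induction b using Germ.inductionOn with | _ b
    obtain ⟨F, hF⟩ := exists_eval_germ_eq V f
    rw [hF, hF, ← Germ.coe_mul, ← Germ.coe_zero, Germ.coe_lt] at hf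
    rw [Germ.coe_lt] at hab
    have hroot : ∀ᶠ e in V, ∃ c, c ∈ Set.Ioo (a e) (b e) ∧ (F e).eval c = 0 :=
      (hab.and hf).mono fun e he => PolynomialIVT.exists_root (F e) he.1 he.2
    obtain ⟨c, hc⟩ := hroot.choice
    refine ⟨(c : Germ (V : Filter I) U), ⟨Germ.coe_lt.mpr (hc.mono fun e he => he.1.1),
      Germ.coe_lt.mpr (hc.mono fun e he => he.1.2)⟩, ?_⟩
    rw [hF]
    exact Germ.coe_eq.mpr (hc.mono fun e he => he.2)

-- The realization is the germ of `Z ↦ j (e Z)`, where `e Z` separates the finite set `Z` like `t`.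
theorem exists_sameSign_germ {M L : Type*} [Field M] [LinearOrder M] [IsStrictOrderedRing M]
    [Field L] [LinearOrder L] [IsStrictOrderedRing L] [PolynomialIVT L] {i : M →+* L} {j : M →+* U}
    (hi : StrictMono i) (hj : StrictMono j) (hroots : ∀ g, RootsInRange i g) (t : L) :
    ∃ (V : Ultrafilter (Finset M)) (τ : Germ (V : Filter (Finset M)) U),
      SameSign i ((diagonal V).comp j) t τ := by
  choose e he using fun Z => exists_separating hi Z t
  let V : Ultrafilter (Finset M) := Ultrafilter.of atTop
  refine ⟨V, ((fun Z => j (e Z) : Finset M → U) : Germ (V : Filter (Finset M)) U), fun g => ?_⟩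
  have hlarge : ∀ᶠ Z in V, g.roots.toFinset ⊆ Z :=
    (eventually_ge_atTop g.roots.toFinset).filter_mono (Ultrafilter.of_le atTop)
  rw [eval₂_diagonal]
  obtain ⟨Z, hZ, hsign⟩ := (hlarge.and (eventually_sign_eq V fun Z => g.eval₂ j (j (e Z)))).exists
  rw [← hsign, Polynomial.eval₂_at_apply, hj.sign_comp]
  exact sign_eval₂_eq_sign_eval hi (hroots g) fun z hz => he Z z (hZ (Multiset.mem_toFinset.mpr hz))

end Ultrapower

section Transfer

open Filter

theorem SignCompatible.exists_germ_extension {L : Type u} {U : Type*} [Field L] [LinearOrder L]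
    [IsStrictOrderedRing L] [PolynomialIVT L] [Field U] [LinearOrder U] [IsStrictOrderedRing U]
    [PolynomialIVT U] {S : Subring (L × U)} (hS : SignCompatible S) (t : L) :
    ∃ (I : Type u) (V : Ultrafilter I) (S' : Subring (L × Germ (V : Filter I) U)),
      SignCompatible S' ∧ (∀ s ∈ S, (s.1, diagonal V s.2) ∈ S') ∧ ∃ τ, (t, τ) ∈ S' := by
  obtain ⟨S₁, hSS₁, hS₁⟩ := hS.exists_le_maximal
  obtain ⟨M, j, hj, rfl⟩ := exists_subfield_of_maximal hS₁
  obtain ⟨V, τ, hτ⟩ := exists_sameSign_germ (i := M.subtype) (fun _ _ h => h) hj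
    (fun g => (rootsInRange_of_maximal hj hS₁ g).1) t
  refine ⟨_, V, _, signCompatible_range_eval₂ hτ, fun s hs => ?_, τ, Polynomial.X, by simp⟩
  obtain ⟨m, rfl⟩ := hSS₁ hs
  exact ⟨Polynomial.C m, by simp⟩

theorem eval₂_pair_mem {R σ L U : Type*} [CommRing R] [CommRing L] [CommRing U] {ρ : R →+* L}
    {ρ' : R →+* U} {a : σ → L} {y : σ → U} {S : Subring (L × U)} (hS : ∀ r, (ρ r, ρ' r) ∈ S)
    (hy : ∀ k, (a k, y k) ∈ S) (q : MvPolynomial σ R) : (q.eval₂ ρ a, q.eval₂ ρ' y) ∈ S := by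
  induction q using MvPolynomial.induction_on with
  | C r => simpa using hS r
  | add q₁ q₂ h₁ h₂ => simpa using add_mem h₁ h₂
  | mul_X q k h => simpa using mul_mem h (hy k)

theorem exists_sign_eval₂_of_germ {R σ ι U I : Type*} [CommRing R] [Finite ι] [Field U]
    [LinearOrder U] {V : Ultrafilter I} {ρ : R →+* U} (q : ι → MvPolynomial σ R)
    (y : σ → Germ (V : Filter I) U) :
    ∃ x : σ → U, ∀ k, sign ((q k).eval₂ ρ x) = sign ((q k).eval₂ ((diagonal V).comp ρ) y) := by
  choose x hx using fun k => Quotient.exists_rep (y k)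
  obtain rfl : (fun k => (x k : Germ (V : Filter I) U)) = y := funext hx
  obtain ⟨e, he⟩ := (eventually_all.mpr fun k =>
    eventually_sign_eq V (fun e => (q k).eval₂ ρ fun l => x l e)).exists
  exact ⟨fun l => x l e, fun k => (he k).trans (by rw [mvEval₂_diagonal])⟩

-- `T` lists the coordinates of `a` that `S` does not yet relate to elements of `U`.
theorem exists_sign_eval₂_of_signCompatible {R σ ι : Type*} {L U : Type u} [CommRing R] [Finite ι]
    [Field L] [LinearOrder L] [IsStrictOrderedRing L] [PolynomialIVT L] [Field U] [LinearOrder U]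
    [IsStrictOrderedRing U] [PolynomialIVT U] {ρ : R →+* L} {ρ' : R →+* U} {S : Subring (L × U)}
    (hS : SignCompatible S) (hρ : ∀ r, (ρ r, ρ' r) ∈ S) {a : σ → L} (T : Finset σ)
    (hT : ∀ k ∉ T, ∃ u, (a k, u) ∈ S) (q : ι → MvPolynomial σ R) :
    ∃ y : σ → U, ∀ k, sign ((q k).eval₂ ρ' y) = sign ((q k).eval₂ ρ a) := by
  classical
  induction T using Finset.induction_on generalizing U with
  | empty =>
    choose y hy using fun k => hT k (Finset.notMem_empty k)
    exact ⟨y, fun k => (hS _ (eval₂_pair_mem hρ hy (q k))).symm⟩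
  | insert l T _ ih =>
    obtain ⟨I, V, S', hS', hSS', τ, hτ⟩ := hS.exists_germ_extension (a l)
    obtain ⟨y, hy⟩ := ih (ρ' := (diagonal V).comp ρ') hS' (fun r => hSS' _ (hρ r)) fun k hk => by
      by_cases hkl : k = l
      · exact hkl ▸ ⟨τ, hτ⟩
      · obtain ⟨u, hu⟩ := hT k (by simp [hkl, hk])
        exact ⟨_, hSS' _ hu⟩
    obtain ⟨x, hx⟩ := exists_sign_eval₂_of_germ q y
    exact ⟨x, fun k => (hx k).trans (hy k)⟩

theorem exists_sign_eval_eq {σ ι : Type*} [Finite σ] [Finite ι] {R L : Type u} [Field R]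
    [LinearOrder R] [IsStrictOrderedRing R] [PolynomialIVT R] [Field L] [LinearOrder L]
    [IsStrictOrderedRing L] [PolynomialIVT L] (ρ : R →+* L) (q : ι → MvPolynomial σ R)
    (a : σ → L) :
    ∃ x : σ → R, ∀ k, sign (eval x (q k)) = sign ((q k).eval₂ ρ a) := by
  have := Fintype.ofFinite σ
  refine exists_sign_eval₂_of_signCompatible (S := (ρ.prod (RingHom.id R)).range) ?_
    (fun r => ⟨r, rfl⟩) Finset.univ (by simp) q
  rintro _ ⟨r, rfl⟩
  exact (strictMono_of_polynomialIVT ρ).sign_comp r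

end Transfer

section Orderings

variable {A : Type*} [CommRing A]

/-- The subsemiring of `A` generated by `T` and the squares of the elements of `S`. For `S = A` this
is the preorder generated by `T`; smaller `S` serve to vary the field whose squares are used. -/
def preorder (T S : Set A) : Subsemiring A :=
  Subsemiring.closure (T ∪ (· ^ 2) '' S)

variable {T S : Set A}

theorem subset_preorder : T ⊆ preorder T S :=
  Set.subset_union_left.trans Subsemiring.subset_closure

theorem sq_mem_preorder {a : A} (ha : a ∈ S) : a ^ 2 ∈ preorder T S :=
  Subsemiring.subset_closure (Or.inr ⟨a, ha, rfl⟩)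

theorem preorder_le {P : Subsemiring A} (hT : T ⊆ P) (hS : ∀ a ∈ S, a ^ 2 ∈ P) :
    preorder T S ≤ P :=
  Subsemiring.closure_le.mpr (Set.union_subset hT (Set.image_subset_iff.mpr hS))

theorem map_nonneg_of_mem_preorder {L : Type*} [CommRing L] [LinearOrder L] [IsStrictOrderedRing L]
    (φ : A →+* L) (hT : ∀ t ∈ T, 0 ≤ φ t) {a : A} (ha : a ∈ preorder T S) : 0 ≤ φ a :=
  preorder_le (P := (Subsemiring.nonneg L).comap φ) hT
    (fun s _ => by simpa using sq_nonneg (φ s)) ha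

theorem exists_add_mul_of_mem_closure_insert {P : Subsemiring A} (hP : ∀ x, x ^ 2 ∈ P) {a x : A}
    (hx : x ∈ Subsemiring.closure (insert a (P : Set A))) : ∃ s ∈ P, ∃ t ∈ P, x = s + a * t := by
  induction hx using Subsemiring.closure_induction with
  | mem x hx =>
    rcases hx with rfl | hx
    · exact ⟨0, zero_mem P, 1, one_mem P, by ring⟩
    · exact ⟨x, hx, 0, zero_mem P, by ring⟩
  | zero => exact ⟨0, zero_mem P, 0, zero_mem P, by ring⟩
  | one => exact ⟨1, one_mem P, 0, zero_mem P, by ring⟩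
  | add _ _ _ _ hx hy =>
    obtain ⟨s, hs, t, ht, rfl⟩ := hx
    obtain ⟨s', hs', t', ht', rfl⟩ := hy
    exact ⟨s + s', add_mem hs hs', t + t', add_mem ht ht', by ring⟩
  | mul _ _ _ _ hx hy =>
    obtain ⟨s, hs, t, ht, rfl⟩ := hx
    obtain ⟨s', hs', t', ht', rfl⟩ := hy
    exact ⟨s * s' + a ^ 2 * (t * t'), add_mem (mul_mem hs hs') (mul_mem (hP a) (mul_mem ht ht')),
      s * t' + t * s', add_mem (mul_mem hs ht') (mul_mem ht hs'), by ring⟩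

theorem exists_maximal_neg_pow_notMem {P : Subsemiring A} {p : A}
    (hp : ∀ k : ℕ, -p ^ (2 * k) ∉ P) :
    ∃ Q, P ≤ Q ∧ Maximal (fun Q : Subsemiring A => ∀ k : ℕ, -p ^ (2 * k) ∉ Q) Q := by
  refine zorn_le_nonempty₀ {Q : Subsemiring A | ∀ k : ℕ, -p ^ (2 * k) ∉ Q} ?_ P hp
  intro c hc hchain Q₀ hQ₀
  refine ⟨sSup c, fun k hk => ?_, fun Q hQ => le_sSup hQ⟩
  obtain ⟨Q, hQ, hkQ⟩ := (Subsemiring.mem_sSup_of_directedOn ⟨Q₀, hQ₀⟩ hchain.directedOn).mp hk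
  exact hc hQ k hkQ

theorem mem_or_mem_of_maximal {P : Subsemiring A} (hsq : ∀ x, x ^ 2 ∈ P) {p : A}
    (hP : Maximal (fun Q : Subsemiring A => ∀ k : ℕ, -p ^ (2 * k) ∉ Q) P) {a b : A}
    (hab : -(a * b) ∈ P) : a ∈ P ∨ b ∈ P := by
  have hadjoin (a : A) (ha : a ∉ P) : ∃ k : ℕ, ∃ s ∈ P, ∃ t ∈ P, -p ^ (2 * k) = s + a * t := by
    by_contra! hnone
    have hle : P ≤ Subsemiring.closure (insert a (P : Set A)) := fun s hs =>
      Subsemiring.subset_closure (Set.mem_insert_of_mem a hs)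
    refine ha (hP.2 (fun k hk => ?_) hle (Subsemiring.subset_closure (Set.mem_insert a _)))
    obtain ⟨s, hs, t, ht, h⟩ := exists_add_mul_of_mem_closure_insert hsq hk
    exact hnone k s hs t ht h
  have hpow (k : ℕ) : p ^ (2 * k) ∈ P := pow_mul' p 2 k ▸ hsq (p ^ k)
  by_contra! hnot
  obtain ⟨k, s, hs, t, ht, ha⟩ := hadjoin a hnot.1
  obtain ⟨l, s', hs', t', ht', hb⟩ := hadjoin b hnot.2
  refine hP.1 (k + l) ?_
  have hsum : -p ^ (2 * (k + l)) =
      -(a * b) * (t * t') + (p ^ (2 * k) * s' + s * p ^ (2 * l) + s * s') := by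
    linear_combination (p ^ (2 * l) + s') * ha - a * t * hb
  rw [hsum]
  exact add_mem (mul_mem hab (mul_mem ht ht'))
    (add_mem (add_mem (mul_mem (hpow k) hs') (mul_mem hs (hpow l))) (mul_mem hs hs'))

theorem exists_isOrdering {P : Subsemiring A} (hsq : ∀ x, x ^ 2 ∈ P) {p : A}
    (hp : ∀ k : ℕ, -p ^ (2 * k) ∉ P) :
    ∃ Q : RingPreordering A, Q.IsOrdering ∧ P ≤ Q.toSubsemiring ∧ ∀ k : ℕ, -p ^ (2 * k) ∉ Q := by
  obtain ⟨Q, hPQ, hQ⟩ := exists_maximal_neg_pow_notMem hp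
  refine ⟨⟨Q, ?_, ?_⟩, ?_, hPQ, hQ.1⟩
  · rintro _ ⟨x, rfl⟩
    exact sq x ▸ hPQ (hsq x)
  · simpa using hQ.1 0
  · exact RingPreordering.isOrdering_iff.mpr fun a b hab =>
      mem_or_mem_of_maximal (fun x => hPQ (hsq x)) hQ hab

theorem exists_linearOrder_of_neg_one_notMem {F : Type*} [Field F] {P : Subsemiring F}
    (hsq : ∀ x, x ^ 2 ∈ P) (hneg : -1 ∉ P) :
    ∃ _ : LinearOrder F, IsStrictOrderedRing F ∧ ∀ x ∈ P, 0 ≤ x := by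
  classical
  obtain ⟨Q, hQ, hPQ, -⟩ := exists_isOrdering hsq (p := 1) (by simpa using hneg)
  let C : RingCone F := ⟨Q.toSubsemiring, fun h h' => Q.eq_zero_of_mem_of_neg_mem h h'⟩
  have : HasMemOrNegMem C := ⟨fun x => mem_or_neg_mem Q x⟩
  let _ : LinearOrder F := LinearOrder.mkOfAddGroupCone C
  have : IsOrderedRing F := IsOrderedRing.mkOfCone C
  exact ⟨inferInstance, IsOrderedRing.toIsStrictOrderedRing F, fun x hx =>
    show x - 0 ∈ Q by simpa using hPQ hx⟩

end Orderings

section WeightedSquares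

variable {F : Type*} [Field F] [LinearOrder F]

variable (F) in
/-- The polynomials `∑ cᵢ gᵢ²` with nonnegative coefficients `cᵢ`. Their values at an algebraic `α`
form the cone that the ordering of `F` generates in `F(α)`. -/
noncomputable def weightedSquares : Subsemiring F[X] :=
  preorder (Polynomial.C '' Set.Ici 0) Set.univ

variable [IsStrictOrderedRing F]

theorem eval_nonneg_of_mem_weightedSquares {G : F[X]} (hG : G ∈ weightedSquares F) (a : F) :
    0 ≤ G.eval a :=
  map_nonneg_of_mem_preorder (Polynomial.evalRingHom a)
    (by rintro _ ⟨c, hc, rfl⟩; simpa using hc) hG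

theorem exists_eq_C_mul_sq_of_mem_closure {G : F[X]} (hG : G ∈ Submonoid.closure
    (Polynomial.C '' Set.Ici (0 : F) ∪ (· ^ 2) '' Set.univ)) :
    ∃ c g, 0 ≤ c ∧ G = Polynomial.C c * g ^ 2 := by
  induction hG using Submonoid.closure_induction with
  | mem G hG =>
    rcases hG with ⟨c, hc, rfl⟩ | ⟨g, -, rfl⟩
    · exact ⟨c, 1, hc, by simp⟩
    · exact ⟨1, g, zero_le_one, by simp⟩
  | one => exact ⟨1, 1, zero_le_one, by simp⟩
  | mul _ _ _ _ hG hH =>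
    obtain ⟨c, g, hc, rfl⟩ := hG
    obtain ⟨d, h, hd, rfl⟩ := hH
    exact ⟨c * d, g * h, mul_nonneg hc hd, by rw [Polynomial.C_mul]; ring⟩

theorem exists_mem_weightedSquares_natDegree_lt {f : F[X]} (hf : f.natDegree ≠ 0) {G : F[X]}
    (hG : G ∈ weightedSquares F) :
    ∃ G' ∈ weightedSquares F, f ∣ G - G' ∧ G'.natDegree < 2 * f.natDegree := by
  rw [weightedSquares, preorder, Subsemiring.mem_closure_iff] at hG
  induction hG using AddSubmonoid.closure_induction with
  | zero => exact ⟨0, zero_mem _, by simp, by rw [Polynomial.natDegree_zero]; omega⟩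
  | mem G hG =>
    obtain ⟨c, g, hc, rfl⟩ := exists_eq_C_mul_sq_of_mem_closure hG
    refine ⟨Polynomial.C c * (g % f) ^ 2,
      mul_mem (subset_preorder ⟨c, hc, rfl⟩) (sq_mem_preorder (Set.mem_univ _)), ?_, ?_⟩
    · rw [← mul_sub, sq_sub_sq]
      have hdvd : f ∣ g - g % f := by
        rw [EuclideanDomain.mod_eq_sub_mul_div, sub_sub_cancel]
        exact dvd_mul_right f _
      exact (hdvd.mul_left _).mul_left _
    · have hmod := Polynomial.natDegree_mod_lt g hf
      have hsq := Polynomial.natDegree_C_mul_le c ((g % f) ^ 2)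
      rw [Polynomial.natDegree_pow] at hsq
      omega
  | add G H _ _ hG hH =>
    obtain ⟨G', hG', hdvdG, hdegG⟩ := hG
    obtain ⟨H', hH', hdvdH, hdegH⟩ := hH
    refine ⟨G' + H', add_mem hG' hH', ?_, ?_⟩
    · rw [add_sub_add_comm]
      exact dvd_add hdvdG hdvdH
    · exact (Polynomial.natDegree_add_le _ _).trans_lt (max_lt hdegG hdegH)

-- After reducing `G` modulo `f`, the cofactor of `f` in `1 + G` has lower degree than `f` and
-- changes sign with `f`, since `1 + G` is positive.
theorem not_dvd_one_add_of_eval_mul_eval_neg {a b : F} {f : F[X]} (hf : f.eval a * f.eval b < 0)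
    {G : F[X]} (hG : G ∈ weightedSquares F) : ¬ f ∣ 1 + G := by
  induction hd : f.natDegree using Nat.strong_induction_on generalizing f G with
  | _ d ih =>
    subst hd
    intro hdvd
    have hdeg : f.natDegree ≠ 0 := fun h => by
      rw [Polynomial.eq_C_of_natDegree_eq_zero h, Polynomial.eval_C, Polynomial.eval_C] at hf
      exact (mul_self_nonneg _).not_gt hf
    obtain ⟨G', hG', hsub, hlt⟩ := exists_mem_weightedSquares_natDegree_lt hdeg hG
    have hpos (x : F) : 0 < (1 + G').eval x := by
      rw [Polynomial.eval_add, Polynomial.eval_one]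
      exact add_pos_of_pos_of_nonneg one_pos (eval_nonneg_of_mem_weightedSquares hG' x)
    obtain ⟨h, hh⟩ : f ∣ 1 + G' := by
      simpa [add_sub_assoc] using dvd_sub hdvd hsub
    have hne : f * h ≠ 0 := fun h0 => by
      have := hpos a
      rw [hh, h0, Polynomial.eval_zero] at this
      exact this.false
    have hdegh : h.natDegree < f.natDegree := by
      have hle := Polynomial.natDegree_add_le 1 G'
      rw [hh, Polynomial.natDegree_mul (left_ne_zero_of_mul hne) (right_ne_zero_of_mul hne),
        Polynomial.natDegree_one] at hle
      omega
    refine ih h.natDegree hdegh ?_ hG' rfl (hh ▸ dvd_mul_left h f)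
    have hprod := mul_pos (hpos a) (hpos b)
    rw [hh, Polynomial.eval_mul, Polynomial.eval_mul, mul_mul_mul_comm] at hprod
    exact neg_of_mul_pos_right hprod hf.le

end WeightedSquares

section RealClosure

theorem mem_Ioo_of_isRoot_of_irreducible {F : Type*} [Field F] [LinearOrder F]
    [IsStrictOrderedRing F] {f : F[X]} (hirr : Irreducible f) {r a b : F} (hr : f.IsRoot r)
    (hab : a < b) (hf : f.eval a * f.eval b < 0) : r ∈ Set.Ioo a b := by
  obtain ⟨q, rfl⟩ := Polynomial.dvd_iff_isRoot.mpr hr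
  have hq := (hirr.isUnit_or_isUnit rfl).resolve_left (Polynomial.not_isUnit_X_sub_C r)
  obtain ⟨c, -, rfl⟩ := Polynomial.isUnit_iff.mp hq
  simp only [Polynomial.eval_mul, Polynomial.eval_sub, Polynomial.eval_X, Polynomial.eval_C] at hf
  rw [mul_mul_mul_comm] at hf
  rcases mul_neg_iff.mp (neg_of_mul_neg_left hf (mul_self_nonneg c)) with ⟨ha, hb⟩ | ⟨ha, hb⟩
  · linarith
  · exact ⟨sub_neg.mp ha, sub_pos.mp hb⟩

theorem polynomialIVT_of_irreducible {F : Type*} [Field F] [LinearOrder F]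
    [IsStrictOrderedRing F] (h : ∀ f : F[X], Irreducible f → ∀ a b, f.eval a * f.eval b < 0 →
      ∃ r, f.IsRoot r) : PolynomialIVT F where
  exists_root f a b hab := by
    induction f using WfDvdMonoid.induction_on_irreducible with
    | zero => simp
    | unit f hunit =>
      obtain ⟨c, -, rfl⟩ := Polynomial.isUnit_iff.mp hunit
      simpa using fun hc => ((mul_self_nonneg c).not_gt hc).elim
    | mul f g _ hg ih =>
      intro hfg
      rw [Polynomial.eval_mul, Polynomial.eval_mul, mul_mul_mul_comm] at hfg
      rcases mul_neg_iff.mp hfg with ⟨-, hf⟩ | ⟨hg', -⟩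
      · obtain ⟨c, hc, hroot⟩ := ih hf
        exact ⟨c, hc, by rw [Polynomial.eval_mul, hroot, mul_zero]⟩
      · obtain ⟨r, hr⟩ := h g hg a b hg'
        refine ⟨r, mem_Ioo_of_isRoot_of_irreducible hg hr hab hg', ?_⟩
        rw [Polynomial.eval_mul, hr.eq_zero, zero_mul]

variable {Ω : Type*} [Field Ω] {T : Set Ω}

theorem exists_maximal_subfield {E₀ : Subfield Ω} (hE₀ : -1 ∉ preorder T (E₀ : Set Ω)) :
    ∃ E, E₀ ≤ E ∧ Maximal (fun E : Subfield Ω => -1 ∉ preorder T (E : Set Ω)) E := by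
  refine zorn_le_nonempty₀ {E : Subfield Ω | -1 ∉ preorder T (E : Set Ω)} ?_ E₀ hE₀
  intro c hc hchain E₁ hE₁
  refine ⟨sSup c, fun hneg => ?_, fun E hE => le_sSup hE⟩
  have hmono : Monotone fun E : Subfield Ω => preorder T (E : Set Ω) := fun E E' h =>
    preorder_le subset_preorder fun a ha => sq_mem_preorder (h ha)
  have hmem {E : Subfield Ω} (hE : E ∈ c) :
      preorder T (E : Set Ω) ≤ sSup ((fun E : Subfield Ω => preorder T (E : Set Ω)) '' c) :=
    le_sSup (Set.mem_image_of_mem _ hE)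
  have hle : preorder T ((sSup c : Subfield Ω) : Set Ω) ≤
      sSup ((fun E : Subfield Ω => preorder T (E : Set Ω)) '' c) := by
    refine preorder_le (subset_preorder.trans (hmem hE₁)) fun a ha => ?_
    obtain ⟨E, hE, ha⟩ := (Subfield.mem_sSup_of_directedOn ⟨E₁, hE₁⟩ hchain.directedOn).mp ha
    exact hmem hE (sq_mem_preorder ha)
  obtain ⟨_, ⟨E, hE, rfl⟩, hneg⟩ := (Subsemiring.mem_sSup_of_directedOn
    (Set.Nonempty.image _ ⟨E₁, hE₁⟩) (hmono.isChain_image hchain).directedOn).mp (hle hneg)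
  exact hc hE hneg

theorem mem_of_maximal_of_aeval_eq_zero {E : Subfield Ω}
    (hE : Maximal (fun E : Subfield Ω => -1 ∉ preorder T (E : Set Ω)) E) [LinearOrder E]
    [IsStrictOrderedRing E] (hT : ∀ t ∈ T, ∃ e : E, 0 ≤ e ∧ (e : Ω) = t) {f : E[X]}
    (hirr : Irreducible f) {a b : E} (hf : f.eval a * f.eval b < 0) {α : Ω}
    (hα : Polynomial.aeval α f = 0) : α ∈ E := by
  let Eα := IntermediateField.adjoin E {α}
  refine hE.2 (y := Eα.toSubfield) (fun hneg => ?_)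
    (fun x hx => Eα.algebraMap_mem ⟨x, hx⟩) (IntermediateField.mem_adjoin_simple_self E α)
  have hle : preorder T (Eα : Set Ω) ≤ (weightedSquares E).map (Polynomial.aeval α).toRingHom := by
    refine preorder_le (fun t ht => ?_) fun x hx => ?_
    · obtain ⟨e, he, rfl⟩ := hT t ht
      exact ⟨Polynomial.C e, subset_preorder ⟨e, he, rfl⟩, Polynomial.aeval_C α e⟩
    · have halg : IsAlgebraic E α := ⟨f, hirr.ne_zero, hα⟩
      rw [SetLike.mem_coe, ← IntermediateField.mem_toSubalgebra,
        IntermediateField.adjoin_simple_toSubalgebra_of_isAlgebraic halg,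
        Algebra.adjoin_singleton_eq_range_aeval] at hx
      obtain ⟨g, rfl⟩ := hx
      exact ⟨g ^ 2, sq_mem_preorder (Set.mem_univ g), map_pow _ _ _⟩
  obtain ⟨G, hG, hGα⟩ := hle hneg
  refine not_dvd_one_add_of_eval_mul_eval_neg hf hG ?_
  have hroot : Polynomial.aeval α (1 + G) = 0 := by
    rw [map_add, map_one, show Polynomial.aeval α G = -1 from hGα, add_neg_cancel]
  refine Dvd.dvd.trans ?_ (minpoly.dvd E α hroot)
  rw [← minpoly.eq_of_irreducible hirr hα]
  exact dvd_mul_right _ _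

theorem exists_polynomialIVT_subfield [IsAlgClosed Ω] {E₀ : Subfield Ω} (hT : T ⊆ E₀)
    (hE₀ : -1 ∉ preorder T (E₀ : Set Ω)) :
    ∃ (E : Subfield Ω) (_ : LinearOrder E), E₀ ≤ E ∧ IsStrictOrderedRing E ∧ PolynomialIVT E ∧
      ∀ e : E, (e : Ω) ∈ T → 0 ≤ e := by
  obtain ⟨E, hE₀E, hE⟩ := exists_maximal_subfield hE₀
  obtain ⟨_, _, hnonneg⟩ := exists_linearOrder_of_neg_one_notMem
    (P := (preorder T (E : Set Ω)).comap E.subtype) (fun e => sq_mem_preorder e.2) hE.1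
  have hTE (e : E) (he : (e : Ω) ∈ T) : 0 ≤ e := hnonneg e (subset_preorder he)
  refine ⟨E, inferInstance, hE₀E, inferInstance, polynomialIVT_of_irreducible ?_, hTE⟩
  intro f hirr a b hf
  obtain ⟨α, hα⟩ := IsAlgClosed.exists_aeval_eq_zero (k := Ω) f hirr.degree_pos.ne'
  have hαE := mem_of_maximal_of_aeval_eq_zero hE
    (fun t ht => ⟨⟨t, hE₀E (hT ht)⟩, hTE _ ht, rfl⟩) hirr hf hα
  refine ⟨⟨α, hαE⟩, Subtype.ext ?_⟩
  exact (Polynomial.aeval_algebraMap_apply Ω (⟨α, hαE⟩ : E) f).symm.trans hα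

theorem exists_mul_sq_eq_of_mem_preorder {A : Type*} [CommRing A] {Q : RingPreordering A}
    {φ : A →+* Ω} {x : Ω} (hx : x ∈ preorder (φ '' Q) (Subfield.closure (Set.range φ) : Set Ω)) :
    ∃ a ∈ Q, ∃ s, φ s ≠ 0 ∧ x * φ s ^ 2 = φ a := by
  induction hx using Subsemiring.closure_induction with
  | mem x hx =>
    rcases hx with ⟨a, ha, rfl⟩ | ⟨y, hy, rfl⟩
    · exact ⟨a, ha, 1, by simp, by simp⟩
    · rw [SetLike.mem_coe, Subfield.mem_closure_iff] at hy
      rw [← RingHom.coe_range, Subring.closure_eq] at hy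
      obtain ⟨_, ⟨a, rfl⟩, _, ⟨s, rfl⟩, rfl⟩ := hy
      by_cases hs : φ s = 0
      · exact ⟨0, zero_mem Q, 1, by simp, by simp [hs]⟩
      · exact ⟨a ^ 2, Q.pow_two_mem a, s, hs, by rw [map_pow]; field_simp⟩
  | zero => exact ⟨0, zero_mem Q, 1, by simp, by simp⟩
  | one => exact ⟨1, one_mem Q, 1, by simp, by simp⟩
  | add x y _ _ hx hy =>
    obtain ⟨a, ha, s, hs, h⟩ := hx
    obtain ⟨a', ha', s', hs', h'⟩ := hy
    refine ⟨a * s' ^ 2 + a' * s ^ 2, add_mem (mul_mem ha (Q.pow_two_mem _))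
      (mul_mem ha' (Q.pow_two_mem _)), s * s', map_mul φ s s' ▸ mul_ne_zero hs hs', ?_⟩
    simp only [map_mul, map_add, map_pow, ← h, ← h']
    ring
  | mul x y _ _ hx hy =>
    obtain ⟨a, ha, s, hs, h⟩ := hx
    obtain ⟨a', ha', s', hs', h'⟩ := hy
    refine ⟨a * a', mul_mem ha ha', s * s', map_mul φ s s' ▸ mul_ne_zero hs hs', ?_⟩
    rw [map_mul, map_mul, ← h, ← h']
    ring

theorem neg_one_notMem_preorder_closure_range {A : Type*} [CommRing A] {Q : RingPreordering A}
    [Q.IsOrdering] {φ : A →+* Ω} (hφ : RingHom.ker φ = Q.support) :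
    -1 ∉ preorder (φ '' Q) (Subfield.closure (Set.range φ) : Set Ω) := by
  intro hneg
  obtain ⟨a, ha, s, hs, h⟩ := exists_mul_sq_eq_of_mem_preorder hneg
  have hsum : a + s ^ 2 ∈ Q.support := by
    rw [← hφ, RingHom.mem_ker, map_add, map_pow, ← h]
    ring
  have hs2 : s ^ 2 ∈ Q.support := RingPreordering.mem_support.mpr
    ⟨Q.pow_two_mem s, by simpa using add_mem (RingPreordering.mem_support.mp hsum).2 ha⟩
  rw [← hφ, RingHom.mem_ker, map_pow] at hs2
  exact hs (pow_eq_zero_iff two_ne_zero |>.mp hs2)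

theorem exists_polynomialIVT_of_isOrdering {A : Type u} [CommRing A] (Q : RingPreordering A)
    [Q.IsOrdering] :
    ∃ (L : Type u) (_ : Field L) (_ : LinearOrder L) (_ : IsStrictOrderedRing L)
      (_ : PolynomialIVT L) (φ : A →+* L), ∀ a, 0 ≤ φ a ↔ a ∈ Q := by
  let K := FractionRing (A ⧸ Q.support)
  let ψ : A ⧸ Q.support →+* AlgebraicClosure K := (algebraMap K _).comp (algebraMap _ K)
  have hψ : Function.Injective ψ :=
    (algebraMap K _).injective.comp (IsFractionRing.injective (A ⧸ Q.support) K)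
  let φ : A →+* AlgebraicClosure K := ψ.comp (Ideal.Quotient.mk Q.support)
  have hker : RingHom.ker φ = Q.support := by
    rw [RingHom.ker_comp_of_injective _ hψ, Ideal.mk_ker]
  have hmem (a : A) : φ a ∈ Subfield.closure (Set.range φ) := Subfield.subset_closure ⟨a, rfl⟩
  obtain ⟨L, _, hL, _, hIVT, hnonneg⟩ := exists_polynomialIVT_subfield
    (by rintro _ ⟨a, -, rfl⟩; exact hmem a) (neg_one_notMem_preorder_closure_range hker)
  let φL : A →+* L := φ.codRestrict L fun a => hL (hmem a)
  have hφL (a : A) (ha : a ∈ Q) : 0 ≤ φL a := hnonneg _ ⟨a, ha, rfl⟩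
  refine ⟨L, inferInstance, inferInstance, inferInstance, hIVT, φL, fun a => ⟨fun ha => ?_, hφL a⟩⟩
  refine (mem_or_neg_mem Q a).elim id fun hneg => ?_
  have hzero : φL a = 0 := le_antisymm (by simpa using hφL _ hneg) ha
  have hsupport : a ∈ Q.support := hker ▸ RingHom.mem_ker.mpr (congrArg Subtype.val hzero)
  exact (RingPreordering.mem_support.mp hsupport).1

end RealClosure

section Positivstellensatz

theorem exists_isOrdering_notMem {A : Type*} [CommRing A] {P : Subsemiring A}
    (hsq : ∀ x, x ^ 2 ∈ P) {p : A} (hp : ∀ k : ℕ, ∀ q ∈ P, ∀ r ∈ P, q * p ≠ p ^ (2 * k) + r) :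
    ∃ Q : RingPreordering A, Q.IsOrdering ∧ P ≤ Q.toSubsemiring ∧ p ∉ Q := by
  have hle : P ≤ Subsemiring.closure (insert (-p) (P : Set A)) := fun s hs =>
    Subsemiring.subset_closure (Set.mem_insert_of_mem (-p) hs)
  obtain ⟨Q, hQ, hPQ, hpQ⟩ := exists_isOrdering (fun x => hle (hsq x)) (p := p) fun k hk => by
    obtain ⟨r, hr, q, hq, h⟩ := exists_add_mul_of_mem_closure_insert hsq hk
    exact hp k q hq r hr (by linear_combination h)
  refine ⟨Q, hQ, hle.trans hPQ, fun hmem => hpQ 1 ?_⟩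
  have hneg : -p ∈ Q := hPQ (Subsemiring.subset_closure (Set.mem_insert (-p) _))
  simpa [sq] using mul_mem hneg hmem

variable {σ R : Type u} {ι : Type*} [Finite σ] [Finite ι] [Field R] [LinearOrder R]
  [IsStrictOrderedRing R] [PolynomialIVT R] (b : ι → MvPolynomial σ R) (p : MvPolynomial σ R)

theorem exists_eval_neg_of_forall_ne
    (hp : ∀ k : ℕ, ∀ q ∈ preorder (Set.range b) Set.univ, ∀ r ∈ preorder (Set.range b) Set.univ,
      q * p ≠ p ^ (2 * k) + r) :
    ∃ x, (∀ i, 0 ≤ eval x (b i)) ∧ eval x p < 0 := by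
  obtain ⟨Q, _, hbQ, hpQ⟩ := exists_isOrdering_notMem (fun x => sq_mem_preorder (Set.mem_univ x)) hp
  obtain ⟨L, _, _, _, _, φ, hφ⟩ := exists_polynomialIVT_of_isOrdering Q
  have heval (q : MvPolynomial σ R) : q.eval₂ (φ.comp C) (fun k => φ (X k)) = φ q :=
    (eval₂_comp_left φ C X q).symm.trans (congrArg φ (eval₂_eta q))
  obtain ⟨x, hx⟩ := exists_sign_eval_eq (φ.comp C) (fun o : Option ι => o.elim p b)
    fun k => φ (X k)
  simp only [heval] at hx
  refine ⟨x, fun i => ?_, ?_⟩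
  · rw [← sign_nonneg_iff, show sign (eval x (b i)) = _ from hx (some i), sign_nonneg_iff]
    exact (hφ _).mpr (hbQ (subset_preorder ⟨i, rfl⟩))
  · rw [← sign_eq_neg_one_iff, show sign (eval x p) = _ from hx none, sign_eq_neg_one_iff]
    exact not_le.mp (mt (hφ p).mp hpQ)

theorem forall_eval_nonneg_iff_exists_mul_eq_pow_add :
    (∀ x, (∀ i, 0 ≤ eval x (b i)) → 0 ≤ eval x p) ↔
      ∃ k : ℕ, ∃ q ∈ preorder (Set.range b) Set.univ, ∃ r ∈ preorder (Set.range b) Set.univ,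
        q * p = p ^ (2 * k) + r := by
  constructor
  · intro hnonneg
    by_contra! hnone
    obtain ⟨x, hb, hp⟩ := exists_eval_neg_of_forall_ne b p hnone
    exact hp.not_ge (hnonneg x hb)
  · rintro ⟨k, q, hq, r, hr, h⟩ x hb
    have heval (s) (hs : s ∈ preorder (Set.range b) Set.univ) : 0 ≤ eval x s :=
      map_nonneg_of_mem_preorder (eval x) (Set.forall_mem_range.mpr hb) hs
    by_contra! hp
    have hpow : 0 < eval x p ^ (2 * k) := (even_two_mul k).pow_pos hp.ne
    have heq : eval x q * eval x p = eval x p ^ (2 * k) + eval x r := by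
      simpa using congrArg (eval x) h
    exact (mul_nonpos_of_nonneg_of_nonpos (heval q hq) hp.le).not_gt
      (heq ▸ add_pos_of_pos_of_nonneg hpow (heval r hr))

end Positivstellensatz

section SumsOfSquares

variable {n m : ℕ}

theorem IsSOS.zero : IsSOS (0 : MvPolynomial (Fin n) ℝ) :=
  ⟨0, Fin.elim0, by simp⟩

theorem IsSOS.sq (g : MvPolynomial (Fin n) ℝ) : IsSOS (g ^ 2) :=
  ⟨1, fun _ => g, by simp⟩

theorem IsSOS.add {p q : MvPolynomial (Fin n) ℝ} (hp : IsSOS p) (hq : IsSOS q) :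
    IsSOS (p + q) := by
  obtain ⟨N, f, rfl⟩ := hp
  obtain ⟨M, g, rfl⟩ := hq
  exact ⟨N + M, Fin.append f g, by simp [Fin.sum_univ_add]⟩

theorem IsSOS.mem_preorder {T : Set (MvPolynomial (Fin n) ℝ)} {p : MvPolynomial (Fin n) ℝ}
    (hp : IsSOS p) : p ∈ preorder T Set.univ := by
  obtain ⟨N, q, rfl⟩ := hp
  exact sum_mem fun i _ => sq_mem_preorder (Set.mem_univ (q i))

variable {b : Fin m → MvPolynomial (Fin n) ℝ}

theorem InPreorder.zero : InPreorder b 0 :=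
  ⟨0, fun _ => IsSOS.zero, by simp⟩

theorem InPreorder.add {p q : MvPolynomial (Fin n) ℝ} (hp : InPreorder b p)
    (hq : InPreorder b q) : InPreorder b (p + q) := by
  obtain ⟨σ, hσ, rfl⟩ := hp
  obtain ⟨τ, hτ, rfl⟩ := hq
  exact ⟨σ + τ, fun J => (hσ J).add (hτ J), by simp [add_mul, Finset.sum_add_distrib]⟩

theorem inPreorder_sq_mul_prod (g : MvPolynomial (Fin n) ℝ) (J : Finset (Fin m)) :
    InPreorder b (g ^ 2 * ∏ i ∈ J, b i) := by
  refine ⟨Pi.single J (g ^ 2), fun K => ?_, ?_⟩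
  · rcases eq_or_ne K J with rfl | hK
    · simpa using IsSOS.sq g
    · simpa [hK] using IsSOS.zero
  · simp [Pi.single_apply]

theorem exists_sq_mul_prod_of_mem_closure {A ι : Type*} [CommRing A] {b : ι → A} {p : A}
    (hp : p ∈ Submonoid.closure (Set.range b ∪ (· ^ 2) '' Set.univ)) :
    ∃ g, ∃ J : Finset ι, p = g ^ 2 * ∏ i ∈ J, b i := by
  classical
  induction hp using Submonoid.closure_induction with
  | mem p hp =>
    rcases hp with ⟨i, rfl⟩ | ⟨g, -, rfl⟩
    · exact ⟨1, {i}, by simp⟩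
    · exact ⟨g, ∅, by simp⟩
  | one => exact ⟨1, ∅, by simp⟩
  | mul p q _ _ hp hq =>
    obtain ⟨g, J, rfl⟩ := hp
    obtain ⟨h, K, rfl⟩ := hq
    have hprod : (∏ i ∈ J, b i) * ∏ i ∈ K, b i =
        (∏ i ∈ J ∩ K, b i) ^ 2 * ∏ i ∈ (J ∪ K) \ (J ∩ K), b i := by
      rw [← prod_union_inter, ← prod_sdiff (inter_subset_union (s := J) (t := K))]
      ring
    refine ⟨g * h * ∏ i ∈ J ∩ K, b i, (J ∪ K) \ (J ∩ K), ?_⟩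
    rw [mul_mul_mul_comm, hprod]
    ring

theorem inPreorder_iff_mem_preorder {p : MvPolynomial (Fin n) ℝ} :
    InPreorder b p ↔ p ∈ preorder (Set.range b) Set.univ := by
  constructor
  · rintro ⟨σ, hσ, rfl⟩
    exact sum_mem fun J _ =>
      mul_mem (hσ J).mem_preorder (prod_mem fun i _ => subset_preorder ⟨i, rfl⟩)
  · intro hp
    rw [preorder, Subsemiring.mem_closure_iff] at hp
    induction hp using AddSubmonoid.closure_induction with
    | mem p hp =>
      obtain ⟨g, J, rfl⟩ := exists_sq_mul_prod_of_mem_closure hp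
      exact inPreorder_sq_mul_prod g J
    | zero => exact InPreorder.zero
    | add p q _ _ hp hq => exact hp.add hq

end SumsOfSquares

section Control

variable {n nu m : ℕ} (h : MvPolynomial (Fin n) ℝ) (f : Fin n → MvPolynomial (Fin n) ℝ)
  (g : Fin n → Fin nu → MvPolynomial (Fin n) ℝ)

theorem hdotFun_convexCombination (x : Fin n → ℝ) (u v : Fin nu → ℝ) {a b : ℝ} (hab : a + b = 1) :
    HdotFun h f g x (a • u + b • v) = a * HdotFun h f g x u + b * HdotFun h f g x v := by
  simp only [HdotFun, HdotPoly, map_sum, map_mul, map_add, eval_C, Pi.add_apply, Pi.smul_apply,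
    smul_eq_mul, mul_sum, ← sum_add_distrib]
  refine sum_congr rfl fun i _ => ?_
  have hinput : ∑ j, (a * u j + b * v j) * eval x (g i j) =
      a * ∑ j, u j * eval x (g i j) + b * ∑ j, v j * eval x (g i j) := by
    simp only [mul_sum, ← sum_add_distrib, add_mul, mul_assoc]
  rw [hinput]
  linear_combination (-eval x (pderiv i h) * eval x (f i)) * hab

theorem convexOn_hdotFun (x : Fin n → ℝ) : ConvexOn ℝ Set.univ (HdotFun h f g x) :=
  ⟨convex_univ, fun u _ v _ _ _ _ _ hab => (hdotFun_convexCombination h f g x u v hab).le⟩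

theorem exists_mem_convexHull_lt_hdotFun_iff (uvert : Fin m → Fin nu → ℝ) (x : Fin n → ℝ) (c : ℝ) :
    (∃ u ∈ convexHull ℝ (Set.range uvert), c < HdotFun h f g x u) ↔
      ∃ i, c < HdotFun h f g x (uvert i) := by
  constructor
  · rintro ⟨u, hu, hc⟩
    obtain ⟨_, ⟨i, rfl⟩, hle⟩ :=
      (convexOn_hdotFun h f g x).exists_ge_of_mem_convexHull (Set.subset_univ _) hu
    exact ⟨i, hc.trans_le hle⟩
  · rintro ⟨i, hc⟩
    exact ⟨uvert i, subset_convexHull ℝ _ ⟨i, rfl⟩, hc⟩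

theorem cbf_iff_psatz_certificate_general (uvert : Fin m → Fin nu → ℝ) (κh βminus : ℝ) :
    (∀ x : Fin n → ℝ, eval x h > βminus →
        ∃ u ∈ convexHull ℝ (Set.range uvert), HdotFun h f g x u > -κh * eval x h)
    ↔ ∃ (kh : ℕ) (qh rh : MvPolynomial (Fin n) ℝ),
        InPreorder (fun i => -HdotPoly h f g (uvert i) - C κh * h) qh ∧
        InPreorder (fun i => -HdotPoly h f g (uvert i) - C κh * h) rh ∧
        qh * (C βminus - h) = (C βminus - h) ^ (2 * kh) + rh := by
  let b i := -HdotPoly h f g (uvert i) - C κh * h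
  have hb (x i) : 0 ≤ eval x (b i) ↔ HdotFun h f g x (uvert i) ≤ -κh * eval x h := by
    simp only [b, HdotFun, map_sub, map_neg, map_mul, eval_C]
    constructor <;> intro <;> linarith
  calc
    _ ↔ ∀ x, (∀ i, 0 ≤ eval x (b i)) → 0 ≤ eval x (C βminus - h) := by
      refine forall_congr' fun x => ?_
      rw [gt_iff_lt, ← not_imp_not]
      simp only [gt_iff_lt, exists_mem_convexHull_lt_hdotFun_iff, not_exists, not_lt, hb, map_sub,
        eval_C, sub_nonneg]
    _ ↔ _ := by
      rw [forall_eval_nonneg_iff_exists_mul_eq_pow_add]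
      simp only [inPreorder_iff_mem_preorder, exists_and_left, b]

end Control

theorem cbf_iff_psatz_certificate {n nu m : ℕ}
    (h : MvPolynomial (Fin n) ℝ)
    (f : Fin n → MvPolynomial (Fin n) ℝ) (g : Fin n → Fin nu → MvPolynomial (Fin n) ℝ)
    (uvert : Fin m → Fin nu → ℝ)
    (κh βminus : ℝ) (hκ : 0 < κh) (hβ : βminus < 0) :
    (∀ x : Fin n → ℝ, eval x h > βminus →
        ∃ u ∈ convexHull ℝ (Set.range uvert), HdotFun h f g x u > -κh * eval x h)
    ↔ ∃ (kh : ℕ) (qh rh : MvPolynomial (Fin n) ℝ),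
        InPreorder (fun i => -HdotPoly h f g (uvert i) - C κh * h) qh ∧
        InPreorder (fun i => -HdotPoly h f g (uvert i) - C κh * h) rh ∧
        qh * (C βminus - h) = (C βminus - h) ^ (2 * kh) + rh :=
  cbf_iff_psatz_certificate_general h f g uvert κh βminus
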